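/- Let m ≥ 2, let M be a connected, simply connected topological m-manifold, and let B ⊆ M be a compact subset homeomorphic to the (m−1)-sphere (the unit sphere in ℝᵐ) that is locally flat in M. Then the complement M \ B has exactly two connected components. -/

import Mathlib

/-!
The complement of `B` is separated by a double cover. Near a point of `B` the complement of `B` has
exactly two local sides (`IsTwoSidedAt`), so up to negation there is one locally constant Boolean
function on the complement near that point which takes different values on the two sides. The
Boolean functions of this kind are the local sections of a two-sheeted cover of `M`, built here as
a `FiberBundleCore` whose transition functions are the locally constant functions `s i xor s j`.
Since `M` is simply connected, the cover has a global section
(`IsCoveringMap.existsUnique_continuousMap_lifts` applied to the identity), that is, a locally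
constant Boolean function on all of `Bᶜ` changing value across `B`
(`exists_global_alternating`). Hence `Bᶜ` has at least two components. It does not have to be known
beforehand that the two local sides can be labelled consistently along `B`.

For the upper bound, the set of points of `B` adherent to a given component of `Bᶜ` is clopen in
`B`, by the local two-sidedness, and is nonempty because `M` is connected. As the sphere is
connected, every component is adherent to one fixed point of `B`, and so contains one of the two
local sides at that point (`component_contains_side`).
-/

/-- A topological space is locally Euclidean of dimension `n` if every point has an
open neighborhood homeomorphic to `ℝⁿ`. -/
def IsLocEuclidean (n : ℕ) (M : Type*) [TopologicalSpace M] : Prop :=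
  ∀ x : M, ∃ U : Set M, IsOpen U ∧ x ∈ U ∧ Nonempty (U ≃ₜ EuclideanSpace ℝ (Fin n))

/-- A subset `S` of a space `M` (thought of as an `n`-manifold) is locally flat if every
point of `S` has an open neighborhood `U` in `M` and a homeomorphism `h : U ≃ₜ ℝⁿ` taking
`U ∩ S` onto `ℝⁿ⁻¹ × {0}` (the hyperplane where the last coordinate vanishes). -/
def IsLocallyFlat {M : Type*} [TopologicalSpace M] (n : ℕ) (S : Set M) : Prop :=
  ∀ x ∈ S, ∃ U : Set M, IsOpen U ∧ x ∈ U ∧ ∃ h : U ≃ₜ EuclideanSpace ℝ (Fin n),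
    ⇑h '' ((↑) ⁻¹' S) =
      {y : EuclideanSpace ℝ (Fin n) | ∀ i : Fin n, (i : ℕ) = n - 1 → y i = 0}

open Set Filter Topology

/-- `V` is an open set which `B` cuts into the two open connected sides `P` and `N`, both
accumulating at every point of `B ∩ V`. -/
structure IsSideDecomposition {M : Type*} [TopologicalSpace M] (B V P N : Set M) : Prop where
  isOpen : IsOpen V
  union_eq : P ∪ N = V \ B
  disj : Disjoint P N
  openP : IsOpen P
  openN : IsOpen N
  preP : IsPreconnected P
  preN : IsPreconnected N
  clP : B ∩ V ⊆ closure P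
  clN : B ∩ V ⊆ closure N

/-- `B` has exactly two local sides in arbitrarily small neighbourhoods of `x`. -/
def IsTwoSidedAt {M : Type*} [TopologicalSpace M] (B : Set M) (x : M) : Prop :=
  ∀ W ∈ 𝓝 x, ∃ V P N, x ∈ V ∧ V ⊆ W ∧ IsSideDecomposition B V P N

/-- `s` is locally constant on `U \ B` and takes both values off `B` arbitrarily close to each
point of `U ∩ B`. The values of `s` on `B` itself are irrelevant. -/
structure IsAlternating {M : Type*} [TopologicalSpace M] (B U : Set M) (s : M → Bool) : Prop where
  isOpen : IsOpen U
  locConst : ∀ y ∈ U \ B, ∀ᶠ z in 𝓝 y, s z = s y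
  both : ∀ y ∈ U ∩ B, ∀ c, ∃ᶠ z in 𝓝[Bᶜ] y, s z = c

/-! ### Local sides and alternating functions -/

section TwoSided

variable {M : Type*} [TopologicalSpace M] {B : Set M}

/-- The two sides are open half-balls in a flattening chart. -/
lemma isTwoSidedAt_of_locallyFlat {m : ℕ} (hm : 2 ≤ m) (hB : IsLocallyFlat m B) {x : M}
    (hx : x ∈ B) : IsTwoSidedAt B x := by
  intro W hW
  obtain ⟨U, hU, hxU, h, hh⟩ := hB x hx
  let i : Fin m := ⟨m - 1, by omega⟩
  let f : EuclideanSpace ℝ (Fin m) →L[ℝ] ℝ := EuclideanSpace.proj i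
  let e : EuclideanSpace ℝ (Fin m) → M := fun y => (h.symm y : M)
  have he : IsOpenEmbedding e := hU.isOpenEmbedding_subtypeVal.comp h.symm.isOpenEmbedding
  have heB : ∀ y, e y ∈ B ↔ f y = 0 := by
    intro y
    have h1 : y ∈ h '' ((↑) ⁻¹' B) ↔ e y ∈ B := by
      constructor
      · rintro ⟨u, hu, rfl⟩
        simpa [e] using hu
      · intro hy
        exact ⟨h.symm y, hy, by simp⟩
    rw [← h1, hh]
    constructor
    · intro hy
      exact hy i rfl
    · intro hy j hj
      have : j = i := Fin.ext hj
      rw [this]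
      exact hy
  have hex : e (h ⟨x, hxU⟩) = x := by simp [e]
  have hWe : e ⁻¹' W ∈ 𝓝 (h ⟨x, hxU⟩) :=
    he.continuous.continuousAt.preimage_mem_nhds (by rwa [hex])
  obtain ⟨r, hr, hball⟩ := Metric.mem_nhds_iff.1 hWe
  set D := Metric.ball (h ⟨x, hxU⟩) r with hD
  have hfs : Function.Surjective f := fun t => ⟨EuclideanSpace.single i t, by simp [f]⟩
  have hfo : IsOpenMap f := f.isOpenMap hfs
  have hclosure : ∀ s : Set ℝ, (0 : ℝ) ∈ closure s → B ∩ e '' D ⊆ closure (e '' (D ∩ f ⁻¹' s)) := by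
    rintro s hs _ ⟨hyB, y, hy, rfl⟩
    refine image_closure_subset_closure_image he.continuous (mem_image_of_mem e ?_)
    refine Metric.isOpen_ball.inter_closure ⟨hy, ?_⟩
    rw [← hfo.preimage_closure_eq_closure_preimage f.continuous, mem_preimage, (heB y).1 hyB]
    exact hs
  refine ⟨e '' D, e '' (D ∩ f ⁻¹' Ioi 0), e '' (D ∩ f ⁻¹' Iio 0), ⟨_, Metric.mem_ball_self hr, hex⟩,
    image_subset_iff.2 hball, ?_⟩
  constructor
  · exact he.isOpenMap _ Metric.isOpen_ball
  · rw [← image_union]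
    ext z
    constructor
    · rintro ⟨y, hy, rfl⟩
      refine ⟨⟨y, by rcases hy with hy | hy <;> exact hy.1, rfl⟩, ?_⟩
      rw [heB]
      rcases hy with hy | hy
      · exact (ne_of_gt hy.2)
      · exact (ne_of_lt hy.2)
    · rintro ⟨⟨y, hy, rfl⟩, hyB⟩
      rw [heB] at hyB
      rcases lt_or_gt_of_ne hyB with h0 | h0
      · exact ⟨y, Or.inr ⟨hy, h0⟩, rfl⟩
      · exact ⟨y, Or.inl ⟨hy, h0⟩, rfl⟩
  · rw [disjoint_image_iff he.injective]
    refine disjoint_left.2 fun y h1 h2 => ?_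
    exact lt_asymm (show 0 < f y from h1.2) h2.2
  · exact he.isOpenMap _ (Metric.isOpen_ball.inter (isOpen_Ioi.preimage f.continuous))
  · exact he.isOpenMap _ (Metric.isOpen_ball.inter (isOpen_Iio.preimage f.continuous))
  · exact (((convex_ball _ _).inter ((convex_Ioi (0 : ℝ)).linear_preimage
      f.toLinearMap)).isPreconnected).image _ he.continuous.continuousOn
  · exact (((convex_ball _ _).inter ((convex_Iio (0 : ℝ)).linear_preimage
      f.toLinearMap)).isPreconnected).image _ he.continuous.continuousOn
  · exact hclosure _ (by rw [closure_Ioi]; exact self_mem_Ici)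
  · exact hclosure _ (by rw [closure_Iio]; exact self_mem_Iic)

lemma eqOn_const_of_locConst {s : M → Bool} {P : Set M} (hP : IsPreconnected P)
    (h : ∀ y ∈ P, ∀ᶠ z in 𝓝 y, s z = s y) : ∃ c, ∀ y ∈ P, s y = c := by
  rcases P.eq_empty_or_nonempty with rfl | ⟨p, hp⟩
  · exact ⟨true, by simp⟩
  · refine ⟨s p, fun y hy => hP.constant ?_ hy hp⟩
    intro z hz
    have : ContinuousAt s z := by
      rw [ContinuousAt, nhds_discrete Bool]
      exact tendsto_pure.2 (h z hz)
    exact this.continuousWithinAt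

lemma IsSideDecomposition.eventually_mem {V P N : Set M} (hV : IsSideDecomposition B V P N) {x : M}
    (hxV : x ∈ V) : ∀ᶠ z in 𝓝[Bᶜ] x, z ∈ P ∪ N := by
  rw [hV.union_eq]
  filter_upwards [mem_nhdsWithin_of_mem_nhds (hV.isOpen.mem_nhds hxV),
    self_mem_nhdsWithin] with z h1 h2 using ⟨h1, h2⟩

/-- An alternating function is constant on each of the two sides, with different values. -/
lemma IsAlternating.exists_values {U V P N : Set M} {s : M → Bool} (hs : IsAlternating B U s)
    (hV : IsSideDecomposition B V P N) (hVU : V ⊆ U) {x : M} (hxV : x ∈ V) (hxB : x ∈ B) :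
    ∃ c, (∀ y ∈ P, s y = c) ∧ ∀ y ∈ N, s y = !c := by
  have hsub : ∀ y ∈ P ∪ N, ∀ᶠ z in 𝓝 y, s z = s y := by
    intro y hy
    rw [hV.union_eq] at hy
    exact hs.locConst y ⟨hVU hy.1, hy.2⟩
  obtain ⟨a, ha⟩ := eqOn_const_of_locConst hV.preP fun y hy => hsub y (Or.inl hy)
  obtain ⟨b, hb⟩ := eqOn_const_of_locConst hV.preN fun y hy => hsub y (Or.inr hy)
  have hab : b = !a := by
    by_contra hne
    have hba : b = a := by revert hne; cases a <;> cases b <;> simp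
    obtain ⟨z, hz, hzPN⟩ :=
      ((hs.both x ⟨hVU hxV, hxB⟩ (!a)).and_eventually (hV.eventually_mem hxV)).exists
    have hza : s z = a := hzPN.elim (ha z) (fun h => (hb z h).trans hba)
    rw [hza] at hz
    cases a <;> simp at hz
  exact ⟨a, ha, hab ▸ hb⟩

lemma exists_local_alternating (hB : IsClosed B) (h2 : ∀ x ∈ B, IsTwoSidedAt B x) (x : M) :
    ∃ U s, x ∈ U ∧ IsAlternating B U s := by
  classical
  by_cases hx : x ∈ B
  · obtain ⟨V, P, N, hxV, -, hV⟩ := h2 x hx univ univ_mem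
    have hsub : P ∪ N ⊆ Bᶜ := fun y hy => (hV.union_eq ▸ hy : y ∈ V \ B).2
    have hN : ∀ y ∈ N, y ∉ P := fun y hy hyP => disjoint_left.1 hV.disj hyP hy
    refine ⟨V, fun y => decide (y ∈ P), hxV, hV.isOpen, ?_, ?_⟩
    · intro y hy
      rw [← hV.union_eq] at hy
      rcases hy with hy | hy
      · filter_upwards [hV.openP.mem_nhds hy] with z hz
        simp [hz, hy]
      · filter_upwards [hV.openN.mem_nhds hy] with z hz
        simp [hN z hz, hN y hy]
    · intro y hy c
      -- The value `true` is attained on `P` and the value `false` on `N`.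
      cases c
      · have h := mem_closure_iff_frequently.1 (hV.clN ⟨hy.2, hy.1⟩)
        rw [frequently_nhdsWithin_iff]
        exact h.mono fun z hz => ⟨by simp [hN z hz], hsub (Or.inr hz)⟩
      · have h := mem_closure_iff_frequently.1 (hV.clP ⟨hy.2, hy.1⟩)
        rw [frequently_nhdsWithin_iff]
        exact h.mono fun z hz => ⟨by simp [hz], hsub (Or.inl hz)⟩
  · exact ⟨Bᶜ, fun _ => true, hx, hB.isOpen_compl, by simp, fun y hy => absurd hy.2 hy.1⟩

/-- The transition function between two alternating functions is locally constant, also across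
`B`: both change value there, so their `xor` does not. -/
lemma IsAlternating.exists_transition (h2 : ∀ x ∈ B, IsTwoSidedAt B x) {U U' : Set M}
    {s s' : M → Bool} (hs : IsAlternating B U s) (hs' : IsAlternating B U' s') {x : M}
    (hx : x ∈ U ∩ U') : ∃ c, ∀ᶠ y in 𝓝[Bᶜ] x, (s y ^^ s' y) = c := by
  by_cases hxB : x ∈ B
  · obtain ⟨V, P, N, hxV, hVU, hV⟩ :=
      h2 x hxB (U ∩ U') ((hs.isOpen.inter hs'.isOpen).mem_nhds hx)
    obtain ⟨a, haP, haN⟩ := hs.exists_values hV (hVU.trans inter_subset_left) hxV hxB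
    obtain ⟨b, hbP, hbN⟩ := hs'.exists_values hV (hVU.trans inter_subset_right) hxV hxB
    refine ⟨a ^^ b, (hV.eventually_mem hxV).mono fun y hy => ?_⟩
    rcases hy with hy | hy
    · rw [haP y hy, hbP y hy]
    · rw [haN y hy, hbN y hy, Bool.not_xor_not]
  · refine ⟨s x ^^ s' x, mem_nhdsWithin_of_mem_nhds ?_⟩
    filter_upwards [hs.locConst x ⟨hx.1, hxB⟩, hs'.locConst x ⟨hx.2, hxB⟩] with y h1 h2
    rw [h1, h2]

lemma neBot_nhdsWithin_compl (h2 : ∀ x ∈ B, IsTwoSidedAt B x) (x : M) : (𝓝[Bᶜ] x).NeBot := by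
  rw [← mem_closure_iff_nhdsWithin_neBot]
  by_cases hx : x ∈ B
  · obtain ⟨V, P, N, hxV, -, hV⟩ := h2 x hx univ univ_mem
    refine closure_mono (fun y hy => ?_) (hV.clP ⟨hx, hxV⟩)
    exact (hV.union_eq ▸ Or.inl hy : y ∈ V \ B).2
  · exact subset_closure hx

/-! ### The double cover and its global section -/

/-- The alternating functions form a locally trivial double cover of `M`, which has a section over
the simply connected space `M`. -/
theorem exists_global_alternating [SimplyConnectedSpace M] [LocallyPathConnectedSpace M]
    (hB : IsClosed B) (h2 : ∀ x ∈ B, IsTwoSidedAt B x) : ∃ t, IsAlternating B univ t := by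
  choose U s hxU hs using exists_local_alternating hB h2
  have hd : ∀ i j x, ∃ c, x ∈ U i ∩ U j → ∀ᶠ y in 𝓝[Bᶜ] x, (s i y ^^ s j y) = c := by
    intro i j x
    by_cases hx : x ∈ U i ∩ U j
    · obtain ⟨c, hc⟩ := (hs i).exists_transition h2 (hs j) hx
      exact ⟨c, fun _ => hc⟩
    · exact ⟨true, fun h => absurd h hx⟩
  choose d hd using hd
  have hne := neBot_nhdsWithin_compl h2
  -- The value of the transition function is determined by `s i` and `s j` near `x` off `B`.
  have huniq : ∀ {i j x c}, x ∈ U i ∩ U j → (∀ᶠ y in 𝓝[Bᶜ] x, (s i y ^^ s j y) = c) →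
      d i j x = c := by
    intro i j x c hx hc
    have := hne x
    obtain ⟨y, h1, h2⟩ := ((hd i j x hx).and hc).exists
    exact h1.symm.trans h2
  have hdloc : ∀ {i j x}, x ∈ U i ∩ U j → ∀ᶠ y in 𝓝 x, d i j y = d i j x := by
    intro i j x hx
    filter_upwards [eventually_nhds_nhdsWithin.2 (hd i j x hx),
      ((hs i).isOpen.inter (hs j).isOpen).mem_nhds hx] with y h1 h2
    exact huniq h2 h1
  let Z : FiberBundleCore M M Bool :=
    { baseSet := U
      isOpen_baseSet := fun i => (hs i).isOpen
      indexAt := id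
      mem_baseSet_at := hxU
      coordChange := fun i j x v => v ^^ d i j x
      coordChange_self := by
        intro i x hx v
        rw [huniq (c := false) ⟨hx, hx⟩ (Eventually.of_forall fun y => by simp), Bool.xor_false]
      continuousOn_coordChange := by
        rintro i j ⟨x, v⟩ ⟨hx, -⟩
        refine ContinuousAt.continuousWithinAt ?_
        rw [ContinuousAt, nhds_discrete Bool]
        refine tendsto_pure.2 ?_
        rw [nhds_prod_eq, nhds_discrete Bool]
        filter_upwards [prod_mem_prod (hdloc hx) (show {v} ∈ pure v from rfl)] with p hp
        have h1 : d i j p.1 = d i j x := hp.1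
        have h2 : p.2 = v := hp.2
        rw [h1, h2]
      coordChange_comp := by
        rintro i j k x ⟨⟨hi, hj⟩, hk⟩ v
        have h : d i k x = (d i j x ^^ d j k x) := by
          refine huniq ⟨hi, hk⟩ ?_
          filter_upwards [hd i j x ⟨hi, hj⟩, hd j k x ⟨hj, hk⟩] with y h1 h2
          rw [← h1, ← h2]
          cases s i y <;> cases s j y <;> cases s k y <;> rfl
        rw [h, Bool.xor_assoc] }
  have hcov : IsCoveringMap (Bundle.TotalSpace.proj : Z.TotalSpace → M) :=
    FiberBundle.isCoveringMap (F := Bool) (E := Z.Fiber)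
  obtain ⟨x₀⟩ : Nonempty M := inferInstance
  obtain ⟨σ, ⟨-, hσ⟩, -⟩ := hcov.existsUnique_continuousMap_lifts (ContinuousMap.id M) x₀
    (⟨x₀, true⟩ : Z.TotalSpace) rfl
  have hσp : ∀ y, (σ y).1 = y := fun y => congrFun hσ y
  let w : M → Bool := fun y => (σ y).2
  -- In the trivialization with index `x`, the section is constant near `x`.
  have hw : ∀ x, ∃ c, ∀ᶠ y in 𝓝 x, (w y ^^ d y x y) = c := by
    intro x
    have hmem : σ x ∈ (Z.localTriv x).source := by
      rw [Z.mem_localTriv_source, ← Z.baseSet_at, hσp]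
      exact hxU x
    have hc : ContinuousAt (fun y => (Z.localTriv x (σ y)).2) x :=
      continuous_snd.continuousAt.comp
        (((Z.localTriv x).continuousOn.continuousAt
          ((Z.localTriv x).open_source.mem_nhds hmem)).comp σ.continuous.continuousAt)
    rw [ContinuousAt, nhds_discrete Bool, tendsto_pure] at hc
    refine ⟨(Z.localTriv x (σ x)).2, hc.mono fun y hy => ?_⟩
    rw [← hy, Z.localTriv_apply]
    change _ = ((σ y).2 ^^ d (σ y).1 x (σ y).1)
    rw [hσp]
  -- Off `B` the function `t` is expressed through any one of the local functions `s x`.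
  let t : M → Bool := fun y => w y ^^ s y y
  have ht : ∀ x, ∃ c, ∀ᶠ y in 𝓝[Bᶜ] x, t y = (c ^^ s x y) := by
    intro x
    obtain ⟨c, hc⟩ := hw x
    refine ⟨c, ?_⟩
    filter_upwards [mem_nhdsWithin_of_mem_nhds hc, self_mem_nhdsWithin,
      mem_nhdsWithin_of_mem_nhds ((hs x).isOpen.mem_nhds (hxU x))] with y h1 hyB hyU
    have h : d y x y = (s y y ^^ s x y) := by
      refine huniq ⟨hxU y, hyU⟩ (mem_nhdsWithin_of_mem_nhds ?_)
      filter_upwards [(hs y).locConst y ⟨hxU y, hyB⟩, (hs x).locConst y ⟨hyU, hyB⟩] with z e1 e2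
      rw [e1, e2]
    rw [← h1, h]
    change (w y ^^ s y y) = _
    cases w y <;> cases s y y <;> cases s x y <;> rfl
  refine ⟨t, isOpen_univ, ?_, ?_⟩
  · intro x hx
    obtain ⟨c, hc⟩ := ht x
    rw [hB.isOpen_compl.nhdsWithin_eq hx.2] at hc
    filter_upwards [hc, (hs x).locConst x ⟨hxU x, hx.2⟩] with y h1 h2
    rw [h1, h2, hc.self_of_nhds]
  · intro x hx b
    obtain ⟨c, hc⟩ := ht x
    refine (((hs x).both x ⟨hxU x, hx.2⟩ (c ^^ b)).and_eventually hc).mono ?_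
    rintro y ⟨h1, h2⟩
    rw [h2, h1]
    cases c <;> cases b <;> rfl

/-! ### Counting the components of the complement -/

/-- The set of points of `B` adherent to a component of `Bᶜ` is clopen in `B` and nonempty, hence
all of `B`; so near every point of `B` the component contains a local side. -/
lemma component_contains_side [ConnectedSpace M] [LocallyConnectedSpace M] (hB : IsClosed B)
    (hBc : IsPreconnected B) (h2 : ∀ x ∈ B, IsTwoSidedAt B x) {V P N : Set M}
    (hV : IsSideDecomposition B V P N) {x a : M} (hxV : x ∈ V) (hxB : x ∈ B) (ha : a ∉ B) :
    P ⊆ connectedComponentIn Bᶜ a ∨ N ⊆ connectedComponentIn Bᶜ a := by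
  set C := connectedComponentIn Bᶜ a with hC
  have haC : a ∈ C := mem_connectedComponentIn ha
  have hCo : IsOpen C := hB.isOpen_compl.connectedComponentIn
  have hCB : C ⊆ Bᶜ := connectedComponentIn_subset _ _
  have habs : ∀ {Q : Set M}, IsPreconnected Q → Q ⊆ Bᶜ → (Q ∩ C).Nonempty → Q ⊆ C := by
    rintro Q hQ hQB ⟨q, hqQ, hqC⟩
    rw [hC, connectedComponentIn_eq hqC]
    exact hQ.subset_connectedComponentIn hqQ hQB
  have hside : ∀ {V P N : Set M}, IsSideDecomposition B V P N → ∀ {y}, y ∈ V → y ∈ closure C →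
      P ⊆ C ∨ N ⊆ C := by
    intro V P N hV y hyV hy
    obtain ⟨z, hzV, hzC⟩ := mem_closure_iff.1 hy V hV.isOpen hyV
    have hsub : P ∪ N ⊆ Bᶜ := fun y hy => (hV.union_eq ▸ hy : y ∈ V \ B).2
    rcases (hV.union_eq ▸ ⟨hzV, hCB hzC⟩ : z ∈ P ∪ N) with hz | hz
    · exact Or.inl (habs hV.preP (subset_union_left.trans hsub) ⟨z, hz, hzC⟩)
    · exact Or.inr (habs hV.preN (subset_union_right.trans hsub) ⟨z, hz, hzC⟩)
  refine hside hV hxV ?_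
  have hne : (B ∩ closure C).Nonempty := by
    by_contra hempty
    rw [not_nonempty_iff_eq_empty] at hempty
    have hclC : closure C ⊆ C := by
      have hsub : closure C ⊆ Bᶜ := fun y hy hyB => (hempty ▸ ⟨hyB, hy⟩ : y ∈ (∅ : Set M))
      exact habs isPreconnected_connectedComponentIn.closure hsub ⟨a, subset_closure haC, haC⟩
    have huniv := IsClopen.eq_univ ⟨closure_subset_iff_isClosed.1 hclC, hCo⟩ ⟨a, haC⟩
    exact hCB (huniv ▸ mem_univ x) hxB
  -- Points of `B` near an adherent point are adherent, through the side contained in `C`.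
  have hopen : ∀ y ∈ B ∩ closure C, ∃ W, IsOpen W ∧ y ∈ W ∧ B ∩ W ⊆ closure C := by
    rintro y ⟨hyB, hy⟩
    obtain ⟨W, P', N', hyW, -, hW⟩ := h2 y hyB univ univ_mem
    refine ⟨W, hW.isOpen, hyW, ?_⟩
    rcases hside hW hyW hy with h | h
    · exact hW.clP.trans (closure_mono h)
    · exact hW.clN.trans (closure_mono h)
  by_contra hx
  have hcover : B ⊆ (⋃₀ {W | IsOpen W ∧ B ∩ W ⊆ closure C}) ∪ (closure C)ᶜ := by
    intro y hy
    by_cases hyC : y ∈ closure C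
    · obtain ⟨W, hWo, hyW, hW⟩ := hopen y ⟨hy, hyC⟩
      exact Or.inl ⟨W, ⟨hWo, hW⟩, hyW⟩
    · exact Or.inr hyC
  obtain ⟨y, hy, hyC⟩ := hne
  obtain ⟨W, hWo, hyW, hW⟩ := hopen y ⟨hy, hyC⟩
  obtain ⟨z, hzB, ⟨W', hW', hzW'⟩, hzC⟩ := hBc _ _ (isOpen_sUnion fun W hW => hW.1)
    isClosed_closure.isOpen_compl hcover ⟨y, hy, W, ⟨hWo, hW⟩, hyW⟩ ⟨x, hxB, hx⟩
  exact hzC (hW'.2 ⟨hzB, hzW'⟩)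

theorem card_components_compl_eq_two [SimplyConnectedSpace M] [LocallyPathConnectedSpace M]
    [LocallyConnectedSpace M] (hB : IsClosed B) (hBc : IsConnected B)
    (h2 : ∀ x ∈ B, IsTwoSidedAt B x) : Nat.card (ConnectedComponents ↥(Bᶜ)) = 2 := by
  obtain ⟨t, ht⟩ := exists_global_alternating hB h2
  obtain ⟨x, hx⟩ := hBc.nonempty
  obtain ⟨V, P, N, hxV, -, hV⟩ := h2 x hx univ univ_mem
  have hsub : P ∪ N ⊆ Bᶜ := fun y hy => (hV.union_eq ▸ hy : y ∈ V \ B).2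
  obtain ⟨p, hp⟩ := closure_nonempty_iff.1 ⟨x, hV.clP ⟨hx, hxV⟩⟩
  obtain ⟨n, hn⟩ := closure_nonempty_iff.1 ⟨x, hV.clN ⟨hx, hxV⟩⟩
  obtain ⟨c, hcP, hcN⟩ := ht.exists_values hV (subset_univ _) hxV hx
  have htc : Continuous fun y : ↥(Bᶜ) => t y := by
    refine continuous_iff_continuousAt.2 fun y => ?_
    rw [ContinuousAt, nhds_discrete Bool]
    exact tendsto_pure.2 (continuous_subtype_val.continuousAt.eventually
      (ht.locConst y ⟨mem_univ _, y.2⟩))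
  let p' : ↥(Bᶜ) := ⟨p, hsub (Or.inl hp)⟩
  let n' : ↥(Bᶜ) := ⟨n, hsub (Or.inr hn)⟩
  rw [Nat.card_eq_two_iff]
  refine ⟨(p' : ConnectedComponents ↥(Bᶜ)), (n' : ConnectedComponents ↥(Bᶜ)), ?_, ?_⟩
  · intro h
    have := congrArg htc.connectedComponentsLift h
    rw [htc.connectedComponentsLift_apply_coe, htc.connectedComponentsLift_apply_coe] at this
    change t p = t n at this
    rw [hcP p hp, hcN n hn] at this
    cases c <;> simp at this
  · have key : ∀ a q : ↥(Bᶜ), (q : M) ∈ connectedComponentIn Bᶜ (a : M) →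
        (a : ConnectedComponents ↥(Bᶜ)) = q := by
      intro a q hq
      rw [connectedComponentIn_eq_image a.2] at hq
      obtain ⟨q', hq', hqq⟩ := hq
      obtain rfl : q' = q := Subtype.ext hqq
      exact (ConnectedComponents.coe_eq_coe'.2 hq').symm
    refine eq_univ_of_forall fun K => ?_
    obtain ⟨a, rfl⟩ := ConnectedComponents.surjective_coe K
    rcases component_contains_side hB hBc.isPreconnected h2 hV hxV hx a.2 with h | h
    · exact Or.inl (key a p' (h hp))
    · exact Or.inr (key a n' (h hn))

end TwoSided

lemma IsLocEuclidean.locallyPathConnectedSpace {m : ℕ} {M : Type*} [TopologicalSpace M]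
    (hM : IsLocEuclidean m M) : LocallyPathConnectedSpace M := by
  choose U hU hxU h using hM
  let φ : ∀ x, OpenPartialHomeomorph M (EuclideanSpace ℝ (Fin m)) := fun x =>
    have : Nonempty (EuclideanSpace ℝ (Fin m)) := inferInstance
    ((hU x).isOpenEmbedding_subtypeVal.comp
      (h x).some.symm.isOpenEmbedding).toOpenPartialHomeomorph.symm
  let _ : ChartedSpace (EuclideanSpace ℝ (Fin m)) M :=
    { atlas := range φ
      chartAt := φ
      mem_chart_source := fun x => ⟨(h x).some ⟨x, hxU x⟩, by simp⟩
      chart_mem_atlas := fun x => mem_range_self x }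
  exact ChartedSpace.locallyPathConnectedSpace (EuclideanSpace ℝ (Fin m)) M

/-- For `m ≥ 2`, a locally flat embedded `(m-1)`-sphere in a connected, simply connected
topological `m`-manifold separates it into exactly two connected components. -/
theorem sphere_separates_simply_connected_m_manifold
    (m : ℕ) (hm : 2 ≤ m)
    (M : Type*) [TopologicalSpace M] [T2Space M] [SecondCountableTopology M]
    (hM : IsLocEuclidean m M) [ConnectedSpace M] [SimplyConnectedSpace M]
    (B : Set M) (hBcpt : IsCompact B)
    (hBhomeo : Nonempty (B ≃ₜ Metric.sphere (0 : EuclideanSpace ℝ (Fin m)) 1))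
    (hBflat : IsLocallyFlat m B) :
    Nat.card (ConnectedComponents ↥(Bᶜ)) = 2 := by
  have := hM.locallyPathConnectedSpace
  obtain ⟨φ⟩ := hBhomeo
  have hrank : 1 < Module.rank ℝ (EuclideanSpace ℝ (Fin m)) := by
    rw [← Module.finrank_eq_rank, finrank_euclideanSpace_fin]
    exact_mod_cast hm
  have : ConnectedSpace (Metric.sphere (0 : EuclideanSpace ℝ (Fin m)) 1) :=
    isConnected_iff_connectedSpace.1 (isConnected_sphere hrank 0 zero_le_one)
  have hB : IsConnected B :=
    isConnected_iff_connectedSpace.2 (φ.symm.surjective.connectedSpace φ.symm.continuous)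
  exact card_components_compl_eq_two hBcpt.isClosed hB
    fun x hx => isTwoSidedAt_of_locallyFlat hm hBflat hx
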